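/- arXiv:1012.5261 — 5 statements merged into one kernel-verified Lean document; each statement's English description precedes it below -/
import Mathlib

section
/- In R the quadratic relation −W₀² + W₁² − W₋₁W₁ + W₀W₂ = (ρ(q²−q⁻²))⁻¹ [G₁, G̃₁] holds; explicitly, −A² + (A*)² − W₋₁·A* + A·W₂ = (ρ(q²−q⁻²))⁻¹ (G₁G̃₁ − G̃₁G₁). -/
/-- Commutator [X,Y] = XY - YX. -/
def lieComm {R : Type*} [Ring R] (X Y : R) : R := X * Y - Y * X

/-- q-commutator [X,Y]_q = q XY - q⁻¹ YX. -/
noncomputable def qcomm {R : Type*} [Ring R] [Algebra ℂ R] (q : ℂ) (X Y : R) : R :=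
  q • (X * Y) - q⁻¹ • (Y * X)

/-! Both sides are multiples of the single commutator `[YX, XY]`, where `X = A` and `Y = A*`.
The two `q`-commutators are antisymmetric combinations `s • YX - t • XY` and `s • XY - t • YX`, so
their commutator is `(s² - t²) • [YX, XY]`, and the scalar shifts are central. On the other side the
words `XYXY` and `X²Y²` and the linear terms `XY` cancel between `X W₂` and `W₋₁ Y`, leaving
`YX²Y - XY²X = [YX, XY]`. -/

theorem lie_smul_sub_smul_swap {K L : Type*} [CommRing K] [LieRing L] [LieAlgebra K L]
    (s t : K) (x y : L) : ⁅s • x - t • y, s • y - t • x⁆ = (s ^ 2 - t ^ 2) • ⁅x, y⁆ := by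
  simp only [sub_lie, lie_sub, smul_lie, lie_smul, lie_self, ← lie_skew x y]
  module

theorem sq_sub_inv_sq_ne_zero {K : Type*} [Field K] {q : K} (hq : q ≠ 0) (hq4 : q ^ 4 ≠ 1) :
    q ^ 2 - q⁻¹ ^ 2 ≠ 0 := by
  refine sub_ne_zero.mpr fun h => hq4 ?_
  calc q ^ 4 = q ^ 2 * q ^ 2 := by ring
    _ = q ^ 2 * q⁻¹ ^ 2 := by rw [← h]
    _ = 1 := by rw [← mul_pow, mul_inv_cancel₀ hq, one_pow]

section Commutator

attribute [local instance] LieRing.ofAssociativeRing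

section CommSemiring

variable {K R : Type*} [CommSemiring K] [Ring R] [Algebra K R]

theorem lie_add_smul_one_add_smul_one (a b : K) (x y : R) :
    ⁅x + a • (1 : R), y + b • (1 : R)⁆ = ⁅x, y⁆ := by
  have smul_one_lie (c : K) (z : R) : ⁅c • (1 : R), z⁆ = 0 :=
    ((Commute.one_left z).smul_left c).lie_eq
  have lie_smul_one (c : K) (z : R) : ⁅z, c • (1 : R)⁆ = 0 :=
    ((Commute.one_right z).smul_right c).lie_eq
  simp only [add_lie, lie_add, smul_one_lie, lie_smul_one, add_zero]

/-- The cubic element `c XYX - X²Y - YX²`. For `c = q² + q⁻²` it equals `-[X, [X, Y]_q]_{q⁻¹}`, the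
negative of the element whose commutator with `X` appears in the `q`-Dolan–Grady relation. -/
def dolanGradyCubic (c : K) (X Y : R) : R :=
  c • (X * Y * X) - X ^ 2 * Y - Y * X ^ 2

theorem mul_dolanGradyCubic_sub_dolanGradyCubic_mul (c : K) (X Y : R) :
    X * dolanGradyCubic c Y X - dolanGradyCubic c X Y * Y = ⁅Y * X, X * Y⁆ := by
  simp only [dolanGradyCubic, Ring.lie_def, mul_sub, sub_mul, mul_smul_comm, smul_mul_assoc,
    pow_two, mul_assoc]
  abel

theorem neg_sq_add_sq_sub_mul_add_mul_eq_smul_lie (r c κ : K) (X Y : R) :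
    -X ^ 2 + Y ^ 2 - (r • dolanGradyCubic c X Y + Y + κ • X) * Y
        + X * (r • dolanGradyCubic c Y X + X + κ • Y) = r • ⁅Y * X, X * Y⁆ := by
  rw [← mul_dolanGradyCubic_sub_dolanGradyCubic_mul c]
  simp only [add_mul, mul_add, smul_mul_assoc, mul_smul_comm, smul_sub, pow_two]
  abel

end CommSemiring

theorem stmt_3_general {K R : Type*} [Field K] [Ring R] [Algebra K R] (q ρ a₁ : K)
    (hq : q ≠ 0) (hq4 : q ^ 4 ≠ 1) (hρ : ρ ≠ 0) (A As : R) :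
    -A ^ 2 + As ^ 2
        - (ρ⁻¹ • dolanGradyCubic (q ^ 2 + q⁻¹ ^ 2) A As + As + (ρ⁻¹ * a₁ * (q - q⁻¹)) • A) * As
        + A * (ρ⁻¹ • dolanGradyCubic (q ^ 2 + q⁻¹ ^ 2) As A + A + (ρ⁻¹ * a₁ * (q - q⁻¹)) • As)
      = (ρ * (q ^ 2 - q⁻¹ ^ 2))⁻¹ •
        ⁅q • (As * A) - q⁻¹ • (A * As) + a₁ • (1 : R),
          q • (A * As) - q⁻¹ • (As * A) + a₁ • (1 : R)⁆ := by
  rw [neg_sq_add_sq_sub_mul_add_mul_eq_smul_lie, lie_add_smul_one_add_smul_one,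
    lie_smul_sub_smul_swap,
    eq_inv_smul_iff₀ (mul_ne_zero hρ (sq_sub_inv_sq_ne_zero hq hq4)), mul_comm ρ, mul_smul,
    smul_inv_smul₀ hρ]

end Commutator

theorem stmt_3
    {R : Type*} [Ring R] [Algebra ℂ R]
    (q ρ a₁ : ℂ) (hq : q ≠ 0) (hq8 : q ^ 8 ≠ 1) (hρ : ρ ≠ 0)
    (A As : R)
    (hDG1 : lieComm A (qcomm q⁻¹ A (qcomm q A As)) = ρ • lieComm A As)
    (hDG2 : lieComm As (qcomm q⁻¹ As (qcomm q As A)) = ρ • lieComm As A)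
    (G1 Gt1 Wm1 W2 : R)
    (hG1 : G1 = qcomm q As A + a₁ • (1 : R))
    (hGt1 : Gt1 = qcomm q A As + a₁ • (1 : R))
    (hWm1 : Wm1 = ρ⁻¹ • ((q ^ 2 + q⁻¹ ^ 2) • (A * As * A) - A ^ 2 * As - As * A ^ 2)
        + As + (ρ⁻¹ * a₁ * (q - q⁻¹)) • A)
    (hW2 : W2 = ρ⁻¹ • ((q ^ 2 + q⁻¹ ^ 2) • (As * A * As) - As ^ 2 * A - A * As ^ 2)
        + A + (ρ⁻¹ * a₁ * (q - q⁻¹)) • As)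
    : -A ^ 2 + As ^ 2 - Wm1 * As + A * W2 = (ρ * (q ^ 2 - q⁻¹ ^ 2))⁻¹ • (G1 * Gt1 - Gt1 * G1) := by
  have hq4 : q ^ 4 ≠ 1 := fun h => hq8 (by rw [pow_mul q 4 2, h, one_pow])
  subst hG1 hGt1 hWm1 hW2
  exact stmt_3_general q ρ a₁ hq hq4 hρ A As
end

section
/- In R one has [W₀, G₂]_q = [G̃₂, W₀]_q, i.e. [A, G₂]_q = [G̃₂, A]_q. (Image of the k = 1 case of the O_q(ŝl₂) relation (qo2), whose common value is ρW₋₂ − ρW₂.) -/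
/-!
Reversing words in two letters `A`, `B` turns `[A, G₂]_q` into `[G̃₂, A]_q`, so the claim is that
`[A, G₂]_q` is invariant under reversal. For the term `[B, A]_q` of `G₂` this is the flexible law
of the product `[·, ·]_q`. For the quartic part and the multiple `ρ (q - q⁻¹) (A² + B²)` of the
squares the defects are, respectively, `-(q² - q⁻²) (D B + B D)` with
`D = [A, [A, [A, B]_q]_{q⁻¹}]`, and `ρ (q² - q⁻²) [A, B²] = ρ (q² - q⁻²) ([A, B] B + B [A, B])`.
They cancel because `D = ρ [A, B]`.
-/

section QCommutator

variable {K R : Type*} [CommRing K] [Ring R] [Algebra K R]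

/-- The `q`-commutator `[X, Y]_q = q X Y - q⁻¹ Y X` as a bilinear map, for an invertible scalar `q`
of an arbitrary commutative ground ring. -/
def qCommutator (q : Kˣ) : R →ₗ[K] R →ₗ[K] R :=
  (q : K) • LinearMap.mul K R - (↑q⁻¹ : K) • (LinearMap.mul K R).flip

theorem qCommutator_apply (q : Kˣ) (X Y : R) :
    qCommutator q X Y = (q : K) • (X * Y) - (↑q⁻¹ : K) • (Y * X) :=
  rfl

theorem qCommutator_sub_swap (q : Kˣ) (X Y : R) :
    qCommutator q X Y - qCommutator q Y X = (q + ↑q⁻¹ : K) • ⁅X, Y⁆ := by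
  simp only [qCommutator_apply, Ring.lie_def]
  module

theorem qCommutator_comm_of_commute (q : Kˣ) {X Y : R} (h : Commute X Y) :
    qCommutator q X Y = qCommutator q Y X := by
  rw [qCommutator_apply, qCommutator_apply, h.eq]

theorem qCommutator_flexible (q : Kˣ) (X Y : R) :
    qCommutator q X (qCommutator q Y X) = qCommutator q (qCommutator q X Y) X := by
  simp only [qCommutator_apply, mul_sub, sub_mul, mul_smul_comm, smul_mul_assoc, mul_assoc]
  module

theorem lie_qCommutator_qCommutator (q : Kˣ) (X Y : R) :
    ⁅X, qCommutator q⁻¹ X (qCommutator q X Y)⁆ =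
      X ^ 3 * Y - Y * X ^ 3
        - (q ^ 2 + 1 + (↑q⁻¹ : K) ^ 2) • (X ^ 2 * Y * X - X * Y * X ^ 2) := by
  have hq : (q : K) * ↑q⁻¹ = 1 := q.mul_inv
  simp only [qCommutator_apply, Ring.lie_def, inv_inv, mul_sub, sub_mul, mul_smul_comm,
    smul_mul_assoc, pow_succ, pow_zero, one_mul, mul_assoc]
  match_scalars <;> grind

/-- The part of `G₂` of degree two in each of `X` and `Y`, without the normalising factor. -/
def quarticPart (q : Kˣ) (X Y : R) : R :=
  (↑q⁻¹ ^ 3 + ↑q⁻¹ : K) • (X ^ 2 * Y ^ 2) - (q ^ 3 + q : K) • (Y ^ 2 * X ^ 2)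
    + (↑q⁻¹ ^ 3 - q ^ 3 : K) • (X * Y ^ 2 * X + Y * X ^ 2 * Y)
    - (↑q⁻¹ ^ 5 + ↑q⁻¹ ^ 3 + 2 * ↑q⁻¹ : K) • (X * Y * X * Y)
    + (q ^ 5 + q ^ 3 + 2 * q : K) • (Y * X * Y * X)

theorem qCommutator_quarticPart_sub (q : Kˣ) (X Y : R) :
    qCommutator q X (quarticPart q X Y) - qCommutator q (quarticPart q Y X) X =
      -(q ^ 2 - ↑q⁻¹ ^ 2 : K) •
        (⁅X, qCommutator q⁻¹ X (qCommutator q X Y)⁆ * Y +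
          Y * ⁅X, qCommutator q⁻¹ X (qCommutator q X Y)⁆) := by
  have hq : (q : K) * ↑q⁻¹ = 1 := q.mul_inv
  rw [lie_qCommutator_qCommutator]
  simp only [quarticPart, qCommutator_apply, mul_add, add_mul, mul_sub, sub_mul, mul_smul_comm,
    smul_mul_assoc, pow_succ, pow_zero, one_mul, mul_assoc]
  match_scalars <;> grind

theorem qCommutator_sq_add_sq_sub (q : Kˣ) (X Y : R) :
    qCommutator q X (X ^ 2 + Y ^ 2) - qCommutator q (Y ^ 2 + X ^ 2) X =
      (q + ↑q⁻¹ : K) • (⁅X, Y⁆ * Y + Y * ⁅X, Y⁆) := by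
  have leibniz : ⁅X, Y ^ 2⁆ = ⁅X, Y⁆ * Y + Y * ⁅X, Y⁆ := by
    simp only [Ring.lie_def]
    noncomm_ring
  rw [← leibniz, ← qCommutator_sub_swap, map_add, map_add, LinearMap.add_apply,
    qCommutator_comm_of_commute q ((Commute.refl X).pow_right 2)]
  abel

theorem qCommutator_quarticPart_add_sq_add_sq (q : Kˣ) (ρ : K) {A B : R}
    (hDG : ⁅A, qCommutator q⁻¹ A (qCommutator q A B)⁆ = ρ • ⁅A, B⁆) :
    qCommutator q A (quarticPart q A B + (ρ * (q - ↑q⁻¹)) • (A ^ 2 + B ^ 2)) =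
      qCommutator q (quarticPart q B A + (ρ * (q - ↑q⁻¹)) • (B ^ 2 + A ^ 2)) A := by
  have quartic_defect := qCommutator_quarticPart_sub q A B
  have square_defect := qCommutator_sq_add_sq_sub q A B
  simp only [hDG, smul_mul_assoc, mul_smul_comm] at quartic_defect
  simp only [map_add, map_smul, LinearMap.add_apply, LinearMap.smul_apply] at square_defect ⊢
  linear_combination (norm := module) quartic_defect + (ρ * (q - ↑q⁻¹) : K) • square_defect

/-- The element `G₂` attached to `(X, Y)`; interchanging `X` and `Y` gives `G̃₂`. The normalising
factor `κ`, the coefficient `c` of `[Y, X]_q` and the constant term `a` are arbitrary here. -/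
def secondG (q : Kˣ) (ρ κ c a : K) (X Y : R) : R :=
  κ • (quarticPart q X Y + (ρ * (q - ↑q⁻¹)) • (X ^ 2 + Y ^ 2) + c • qCommutator q Y X)
    + a • (1 : R)

theorem stmt_5_general (q : Kˣ) (ρ κ c a : K) {A B : R}
    (hDG : ⁅A, qCommutator q⁻¹ A (qCommutator q A B)⁆ = ρ • ⁅A, B⁆) :
    qCommutator q A (secondG q ρ κ c a A B) = qCommutator q (secondG q ρ κ c a B A) A := by
  have flexible := qCommutator_flexible q A B
  have unital := qCommutator_comm_of_commute q (Commute.one_right A)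
  have main := qCommutator_quarticPart_add_sq_add_sq q ρ hDG
  rw [secondG, secondG, map_add (qCommutator q A), map_smul, map_add (qCommutator q A), main,
    map_smul, flexible, map_smul, unital]
  simp only [map_add, map_smul, LinearMap.add_apply, LinearMap.smul_apply]

end QCommutator

theorem qcomm_eq_qCommutator {R : Type*} [Ring R] [Algebra ℂ R] (q : ℂˣ) (X Y : R) :
    qcomm (q : ℂ) X Y = qCommutator q X Y := by
  rw [qcomm, qCommutator_apply, Units.val_inv_eq_inv_val]

theorem stmt_5
    {R : Type*} [Ring R] [Algebra ℂ R]
    (q ρ a₁ : ℂ) (hq : q ≠ 0) (hq8 : q ^ 8 ≠ 1) (hρ : ρ ≠ 0)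
    (A As : R)
    (hDG1 : lieComm A (qcomm q⁻¹ A (qcomm q A As)) = ρ • lieComm A As)
    (hDG2 : lieComm As (qcomm q⁻¹ As (qcomm q As A)) = ρ • lieComm As A)
    (G1 Gt1 Wm1 W2 : R)
    (hG1 : G1 = qcomm q As A + a₁ • (1 : R))
    (hGt1 : Gt1 = qcomm q A As + a₁ • (1 : R))
    (hWm1 : Wm1 = ρ⁻¹ • ((q ^ 2 + q⁻¹ ^ 2) • (A * As * A) - A ^ 2 * As - As * A ^ 2)
        + As + (ρ⁻¹ * a₁ * (q - q⁻¹)) • A)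
    (hW2 : W2 = ρ⁻¹ • ((q ^ 2 + q⁻¹ ^ 2) • (As * A * As) - As ^ 2 * A - A * As ^ 2)
        + A + (ρ⁻¹ * a₁ * (q - q⁻¹)) • As)
    (a₂ : ℂ) (G2 Gt2 : R)
    (hG2 : G2 = (ρ * (q ^ 2 + q⁻¹ ^ 2))⁻¹ •
        ((q⁻¹ ^ 3 + q⁻¹) • (A ^ 2 * As ^ 2) - (q ^ 3 + q) • (As ^ 2 * A ^ 2)
          + (q⁻¹ ^ 3 - q ^ 3) • (A * As ^ 2 * A + As * A ^ 2 * As)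
          - (q⁻¹ ^ 5 + q⁻¹ ^ 3 + 2 * q⁻¹) • (A * As * A * As)
          + (q ^ 5 + q ^ 3 + 2 * q) • (As * A * As * A)
          + (ρ * (q - q⁻¹)) • (A ^ 2 + As ^ 2)
          + (a₁ * (q ^ 2 + q⁻¹ ^ 2) * (q - q⁻¹)) • qcomm q As A) + a₂ • (1 : R))
    (hGt2 : Gt2 = (ρ * (q ^ 2 + q⁻¹ ^ 2))⁻¹ •
        ((q⁻¹ ^ 3 + q⁻¹) • (As ^ 2 * A ^ 2) - (q ^ 3 + q) • (A ^ 2 * As ^ 2)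
          + (q⁻¹ ^ 3 - q ^ 3) • (As * A ^ 2 * As + A * As ^ 2 * A)
          - (q⁻¹ ^ 5 + q⁻¹ ^ 3 + 2 * q⁻¹) • (As * A * As * A)
          + (q ^ 5 + q ^ 3 + 2 * q) • (A * As * A * As)
          + (ρ * (q - q⁻¹)) • (As ^ 2 + A ^ 2)
          + (a₁ * (q ^ 2 + q⁻¹ ^ 2) * (q - q⁻¹)) • qcomm q A As) + a₂ • (1 : R))
    : qcomm q A G2 = qcomm q Gt2 A := by
  subst hG2 hGt2
  lift q to ℂˣ using hq.isUnit
  simp only [← Units.val_inv_eq_inv_val, qcomm_eq_qCommutator] at hDG1 ⊢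
  exact stmt_5_general q ρ _ _ a₂ hDG1
end

section
/- In R one has [W₀, G₂] + [G₁, W₋₁] = 0, i.e. [A, G₂] + [G₁, W₋₁] = 0. (Image of the O_q(ŝl₂) relation (qo6) with k = 0, l = 1.) -/
/-!
Since `W₋₁ = ρ⁻¹[A, G₁]_q + A*`, the first q-Dolan–Grady relation says exactly that `A` commutes
with `W₋₁`. Up to an additive constant,
`ρ(q² + q⁻²) G₂ = ρ(q² + q⁻²)[A*, W₋₁]_q - [G̃₁, G₁]_q
  + ρ(q - q⁻¹)(A*W₋₁ + W₋₁A* + A² - (q² + 1 + q⁻²)A*²)`.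
Commuting `A` with the terms containing `W₋₁` only affects their factor `A*`, while
`[A, [G̃₁, G₁]_q]` follows from the twisted Leibniz rule
`[A, XY] = q (X [A, Y]_q - [X, A]_q Y)`, because `[G̃₁, A]_q = [A, G₁]_q = ρ(W₋₁ - A*)`.
Everything cancels except `[W₋₁, G₁]`.
-/

namespace QOnsager

lemma ne_zero_of_sq_add_inv_sq_ne_zero {K : Type*} [Field K] {q : K}
    (hs : q ^ 2 + q⁻¹ ^ 2 ≠ 0) : q ≠ 0 := by
  rintro rfl
  simp at hs

lemma sq_add_inv_sq_ne_zero {K : Type*} [Field K] {q : K} (hq : q ≠ 0) (hq8 : q ^ 8 ≠ 1) :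
    q ^ 2 + q⁻¹ ^ 2 ≠ 0 := by
  intro h
  have hq4 : q ^ 4 + 1 = 0 := by
    calc q ^ 4 + 1 = q ^ 2 * (q ^ 2 + q⁻¹ ^ 2) := by field_simp
      _ = 0 := by rw [h, mul_zero]
  exact hq8 (by linear_combination (q ^ 4 - 1) * hq4)

lemma lie_mul_add_mul_of_commute {R : Type*} [NonUnitalRing R] {A W : R} (h : Commute A W) (B : R) :
    ⁅A, B * W + W * B⁆ = ⁅A, B⁆ * W + W * ⁅A, B⁆ := by
  simp only [Ring.lie_def, mul_add, add_mul, mul_sub, sub_mul, mul_assoc, ← h.eq]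
  simp only [← mul_assoc, h.eq]
  abel

section QCommutator

variable {K R : Type*} [Field K] [Ring R] [Algebra K R] {q : K}

/-- The q-commutator `[X, Y]_q = q XY - q⁻¹ YX` over an arbitrary field; for `K = ℂ` it is
`qcomm`. -/
def qCommutator (q : K) (X Y : R) : R :=
  q • (X * Y) - q⁻¹ • (Y * X)

lemma qCommutator_inv (q : K) (X Y : R) : qCommutator q⁻¹ X Y = -qCommutator q Y X := by
  simp only [qCommutator, inv_inv, neg_sub]

lemma qCommutator_flexible (q : K) (X Y : R) :
    qCommutator q (qCommutator q X Y) X = qCommutator q X (qCommutator q Y X) := by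
  simp only [qCommutator, mul_sub, sub_mul, mul_smul_comm, smul_mul_assoc, mul_assoc]
  module

lemma qCommutator_qCommutator (hq : q ≠ 0) (X Y : R) :
    qCommutator q X (qCommutator q Y X)
      = (q ^ 2 + q⁻¹ ^ 2) • (X * Y * X) - X ^ 2 * Y - Y * X ^ 2 := by
  simp only [qCommutator, pow_two X, mul_sub, sub_mul, mul_smul_comm, smul_mul_assoc, mul_assoc]
  match_scalars <;> field_simp
  ring

lemma qCommutator_add_smul_one_left (q a : K) (X Y : R) :
    qCommutator q (X + a • (1 : R)) Y = qCommutator q X Y + (a * (q - q⁻¹)) • Y := by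
  simp only [qCommutator, add_mul, mul_add, smul_mul_assoc, mul_smul_comm, one_mul, mul_one]
  module

lemma qCommutator_add_smul_one_right (q a : K) (X Y : R) :
    qCommutator q X (Y + a • (1 : R)) = qCommutator q X Y + (a * (q - q⁻¹)) • X := by
  simp only [qCommutator, add_mul, mul_add, smul_mul_assoc, mul_smul_comm, one_mul, mul_one]
  module

lemma lie_mul_eq_qCommutator (hq : q ≠ 0) (A X Y : R) :
    ⁅A, X * Y⁆ = q • (X * qCommutator q A Y - qCommutator q X A * Y) := by
  simp only [Ring.lie_def, qCommutator, mul_sub, sub_mul, mul_smul_comm, smul_mul_assoc, mul_assoc]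
  match_scalars <;> field_simp
  ring

lemma lie_qCommutator_of_qCommutator_eq (hq : q ≠ 0) {A X Y U : R}
    (hX : qCommutator q X A = U) (hY : qCommutator q A Y = U) :
    ⁅A, qCommutator q X Y⁆
      = (q ^ 2 • X + q⁻¹ ^ 2 • Y) * U - U * (q ^ 2 • Y + q⁻¹ ^ 2 • X) := by
  have hXY : ⁅A, X * Y⁆ = q • (X * U - U * Y) := by
    rw [lie_mul_eq_qCommutator hq, hX, hY]
  have hYX : ⁅A, Y * X⁆ = q⁻¹ • (U * X - Y * U) := by
    rw [lie_mul_eq_qCommutator (inv_ne_zero hq), qCommutator_inv, qCommutator_inv, hX, hY]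
    noncomm_ring
  calc ⁅A, qCommutator q X Y⁆ = q • ⁅A, X * Y⁆ - q⁻¹ • ⁅A, Y * X⁆ := by
        simp only [Ring.lie_def, qCommutator, mul_sub, sub_mul, mul_smul_comm, smul_mul_assoc]
        module
    _ = _ := by
        rw [hXY, hYX]
        simp only [mul_add, add_mul, mul_smul_comm, smul_mul_assoc]
        module

lemma lie_qCommutator_of_commute (q : K) {A W : R} (h : Commute A W) (B : R) :
    ⁅A, qCommutator q B W⁆
      = ⁅W, qCommutator q B A⁆ + (q - q⁻¹) • (A * B * W - W * B * A) := by
  have hBWA : B * W * A = B * A * W := by rw [mul_assoc, ← h.eq, mul_assoc]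
  have hAWB : A * (W * B) = W * (A * B) := by rw [← mul_assoc, h.eq, mul_assoc]
  simp only [Ring.lie_def, qCommutator, mul_sub, sub_mul, mul_smul_comm, smul_mul_assoc, hBWA,
    hAWB, ← mul_assoc]
  module

end QCommutator

section Generators

variable {K R : Type*} [Field K] [Ring R] [Algebra K R] {q ρ : K}

/-- The alternating element `G₁ = [A*, A]_q + a₁`, with `B` for `A*`. Its companion `G̃₁` is
`gOne q a₁ B A`. -/
def gOne (q a₁ : K) (A B : R) : R :=
  qCommutator q B A + a₁ • (1 : R)

/-- The alternating element `W₋₁`, with `B` for `A*`. -/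
def wNegOne (q ρ a₁ : K) (A B : R) : R :=
  ρ⁻¹ • ((q ^ 2 + q⁻¹ ^ 2) • (A * B * A) - A ^ 2 * B - B * A ^ 2)
    + B + (ρ⁻¹ * a₁ * (q - q⁻¹)) • A

/-- The alternating element `G₂`, with `B` for `A*`, as an explicit polynomial; `a₂` is its free
additive constant. See `smul_gTwo` for its expression through `W₋₁`, `G₁` and `G̃₁`. -/
def gTwo (q ρ a₁ a₂ : K) (A B : R) : R :=
  (ρ * (q ^ 2 + q⁻¹ ^ 2))⁻¹ •
    ((q⁻¹ ^ 3 + q⁻¹) • (A ^ 2 * B ^ 2) - (q ^ 3 + q) • (B ^ 2 * A ^ 2)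
      + (q⁻¹ ^ 3 - q ^ 3) • (A * B ^ 2 * A + B * A ^ 2 * B)
      - (q⁻¹ ^ 5 + q⁻¹ ^ 3 + 2 * q⁻¹) • (A * B * A * B)
      + (q ^ 5 + q ^ 3 + 2 * q) • (B * A * B * A)
      + (ρ * (q - q⁻¹)) • (A ^ 2 + B ^ 2)
      + (a₁ * (q ^ 2 + q⁻¹ ^ 2) * (q - q⁻¹)) • qCommutator q B A) + a₂ • (1 : R)

lemma qCommutator_gOne_swap (q a₁ : K) (A B : R) :
    qCommutator q (gOne q a₁ B A) A = qCommutator q A (gOne q a₁ A B) := by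
  rw [gOne, gOne, qCommutator_add_smul_one_left, qCommutator_add_smul_one_right,
    qCommutator_flexible]

lemma qCommutator_gOne (hq : q ≠ 0) (hρ : ρ ≠ 0) (a₁ : K) (A B : R) :
    qCommutator q A (gOne q a₁ A B) = ρ • (wNegOne q ρ a₁ A B - B) := by
  rw [gOne, qCommutator_add_smul_one_right, qCommutator_qCommutator hq, wNegOne]
  match_scalars <;> field_simp
  ring

lemma commute_wNegOne (hq : q ≠ 0) (hρ : ρ ≠ 0) (a₁ : K) {A B : R}
    (hDG : ⁅A, qCommutator q⁻¹ A (qCommutator q A B)⁆ = ρ • ⁅A, B⁆) :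
    Commute A (wNegOne q ρ a₁ A B) := by
  set W := wNegOne q ρ a₁ A B with hW
  have hBA : qCommutator q⁻¹ A (qCommutator q A B)
      = ρ • B - ρ • W + (a₁ * (q - q⁻¹)) • A := by
    have hGOne := qCommutator_gOne hq hρ a₁ A B
    rw [gOne, qCommutator_add_smul_one_right, ← hW] at hGOne
    rw [qCommutator_inv, qCommutator_flexible, eq_sub_of_add_eq hGOne]
    module
  have hlie : ⁅A, qCommutator q⁻¹ A (qCommutator q A B)⁆ = ρ • ⁅A, B⁆ - ρ • ⁅A, W⁆ := by
    simp only [hBA, Ring.lie_def, mul_add, add_mul, mul_sub, sub_mul, mul_smul_comm,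
      smul_mul_assoc]
    module
  rw [hDG, eq_comm, sub_eq_self] at hlie
  exact commute_iff_lie_eq.mpr ((smul_eq_zero_iff_right hρ).mp hlie)

lemma smul_gTwo (hs : q ^ 2 + q⁻¹ ^ 2 ≠ 0) (hρ : ρ ≠ 0) (a₁ a₂ : K) (A B : R) :
    (ρ * (q ^ 2 + q⁻¹ ^ 2)) • gTwo q ρ a₁ a₂ A B
      = (ρ * (q ^ 2 + q⁻¹ ^ 2)) • qCommutator q B (wNegOne q ρ a₁ A B)
        - qCommutator q (gOne q a₁ B A) (gOne q a₁ A B)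
        + (ρ * (q - q⁻¹)) • (B * wNegOne q ρ a₁ A B + wNegOne q ρ a₁ A B * B + A ^ 2
          - (q ^ 2 + 1 + q⁻¹ ^ 2) • B ^ 2)
        + (ρ * (q ^ 2 + q⁻¹ ^ 2) * a₂ + a₁ ^ 2 * (q - q⁻¹)) • (1 : R) := by
  have hq := ne_zero_of_sq_add_inv_sq_ne_zero hs
  rw [gTwo, smul_add, smul_inv_smul₀ (mul_ne_zero hρ hs)]
  simp only [qCommutator, gOne, wNegOne, pow_two A, pow_two B, mul_add, add_mul, mul_sub,
    sub_mul, smul_mul_assoc, mul_smul_comm, mul_one, one_mul, mul_assoc]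
  match_scalars <;> field_simp <;> ring

lemma lie_qCommutator_gOne (hq : q ≠ 0) (hρ : ρ ≠ 0) (a₁ : K) (A B : R) :
    ⁅A, qCommutator q (gOne q a₁ B A) (gOne q a₁ A B)⁆
      = (ρ * (q - q⁻¹)) •
        (((q ^ 2 + 1 + q⁻¹ ^ 2) • (A * B) - B * A) * (wNegOne q ρ a₁ A B - B)
          - (wNegOne q ρ a₁ A B - B) * ((q ^ 2 + 1 + q⁻¹ ^ 2) • (B * A) - A * B)) := by
  have hU := qCommutator_gOne hq hρ a₁ A B
  have hcomb (X Y : R) : q ^ 2 • gOne q a₁ X Y + q⁻¹ ^ 2 • gOne q a₁ Y X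
      = (q - q⁻¹) • ((q ^ 2 + 1 + q⁻¹ ^ 2) • (Y * X) - X * Y)
        + (a₁ * (q ^ 2 + q⁻¹ ^ 2)) • (1 : R) := by
    simp only [gOne, qCommutator]
    match_scalars <;> field_simp <;> ring
  rw [lie_qCommutator_of_qCommutator_eq hq ((qCommutator_gOne_swap q a₁ A B).trans hU) hU,
    hcomb, hcomb]
  simp only [add_mul, mul_add, smul_mul_assoc, mul_smul_comm, one_mul, mul_one]
  module

lemma lie_gTwo (hs : q ^ 2 + q⁻¹ ^ 2 ≠ 0) (hρ : ρ ≠ 0) (a₁ a₂ : K) {A B : R}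
    (hDG : ⁅A, qCommutator q⁻¹ A (qCommutator q A B)⁆ = ρ • ⁅A, B⁆) :
    ⁅A, gTwo q ρ a₁ a₂ A B⁆ = ⁅wNegOne q ρ a₁ A B, gOne q a₁ A B⁆ := by
  have hq := ne_zero_of_sq_add_inv_sq_ne_zero hs
  have hAW := commute_wNegOne hq hρ a₁ hDG
  have hGG := lie_qCommutator_gOne hq hρ a₁ A B
  have hG₂ := smul_gTwo hs hρ a₁ a₂ A B
  set W := wNegOne q ρ a₁ A B
  set G := gOne q a₁ A B with hG
  set Gt := gOne q a₁ B A
  refine smul_right_injective R (mul_ne_zero hρ hs) ?_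
  calc (ρ * (q ^ 2 + q⁻¹ ^ 2)) • ⁅A, gTwo q ρ a₁ a₂ A B⁆
      = ⁅A, (ρ * (q ^ 2 + q⁻¹ ^ 2)) • gTwo q ρ a₁ a₂ A B⁆ := by
        simp only [Ring.lie_def, smul_sub, mul_smul_comm, smul_mul_assoc]
    _ = (ρ * (q ^ 2 + q⁻¹ ^ 2)) • ⁅A, qCommutator q B W⁆ - ⁅A, qCommutator q Gt G⁆
          + (ρ * (q - q⁻¹)) • (⁅A, B * W + W * B⁆ - (q ^ 2 + 1 + q⁻¹ ^ 2) • ⁅A, B ^ 2⁆) := by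
        rw [hG₂]
        simp only [Ring.lie_def, pow_two A, mul_add, add_mul, mul_sub, sub_mul, mul_smul_comm,
          smul_mul_assoc, mul_one, one_mul, mul_assoc]
        module
    _ = (ρ * (q ^ 2 + q⁻¹ ^ 2)) • ⁅W, qCommutator q B A⁆ := by
        rw [lie_qCommutator_of_commute q hAW, hGG, lie_mul_add_mul_of_commute hAW]
        simp only [Ring.lie_def, pow_two B, mul_add, mul_sub, sub_mul, mul_smul_comm,
          smul_mul_assoc, mul_assoc]
        module
    _ = (ρ * (q ^ 2 + q⁻¹ ^ 2)) • ⁅W, G⁆ := by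
        simp only [hG, gOne, Ring.lie_def, mul_add, add_mul, mul_smul_comm, smul_mul_assoc,
          mul_one, one_mul, add_sub_add_right_eq_sub]

end Generators

end QOnsager

open QOnsager

theorem stmt_10_general {K R : Type*} [Field K] [Ring R] [Algebra K R] {q ρ : K}
    (hs : q ^ 2 + q⁻¹ ^ 2 ≠ 0) (hρ : ρ ≠ 0) (a₁ a₂ : K) {A B : R}
    (hDG : ⁅A, qCommutator q⁻¹ A (qCommutator q A B)⁆ = ρ • ⁅A, B⁆) :
    ⁅A, gTwo q ρ a₁ a₂ A B⁆ + ⁅gOne q a₁ A B, wNegOne q ρ a₁ A B⁆ = 0 := by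
  rw [lie_gTwo hs hρ a₁ a₂ hDG, Ring.lie_def, Ring.lie_def, sub_add_sub_cancel, sub_self]

theorem stmt_10
    {R : Type*} [Ring R] [Algebra ℂ R]
    (q ρ a₁ : ℂ) (hq : q ≠ 0) (hq8 : q ^ 8 ≠ 1) (hρ : ρ ≠ 0)
    (A As : R)
    (hDG1 : lieComm A (qcomm q⁻¹ A (qcomm q A As)) = ρ • lieComm A As)
    (hDG2 : lieComm As (qcomm q⁻¹ As (qcomm q As A)) = ρ • lieComm As A)
    (G1 Gt1 Wm1 W2 : R)
    (hG1 : G1 = qcomm q As A + a₁ • (1 : R))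
    (hGt1 : Gt1 = qcomm q A As + a₁ • (1 : R))
    (hWm1 : Wm1 = ρ⁻¹ • ((q ^ 2 + q⁻¹ ^ 2) • (A * As * A) - A ^ 2 * As - As * A ^ 2)
        + As + (ρ⁻¹ * a₁ * (q - q⁻¹)) • A)
    (hW2 : W2 = ρ⁻¹ • ((q ^ 2 + q⁻¹ ^ 2) • (As * A * As) - As ^ 2 * A - A * As ^ 2)
        + A + (ρ⁻¹ * a₁ * (q - q⁻¹)) • As)
    (a₂ : ℂ) (G2 Gt2 : R)
    (hG2 : G2 = (ρ * (q ^ 2 + q⁻¹ ^ 2))⁻¹ •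
        ((q⁻¹ ^ 3 + q⁻¹) • (A ^ 2 * As ^ 2) - (q ^ 3 + q) • (As ^ 2 * A ^ 2)
          + (q⁻¹ ^ 3 - q ^ 3) • (A * As ^ 2 * A + As * A ^ 2 * As)
          - (q⁻¹ ^ 5 + q⁻¹ ^ 3 + 2 * q⁻¹) • (A * As * A * As)
          + (q ^ 5 + q ^ 3 + 2 * q) • (As * A * As * A)
          + (ρ * (q - q⁻¹)) • (A ^ 2 + As ^ 2)
          + (a₁ * (q ^ 2 + q⁻¹ ^ 2) * (q - q⁻¹)) • qcomm q As A) + a₂ • (1 : R))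
    (hGt2 : Gt2 = (ρ * (q ^ 2 + q⁻¹ ^ 2))⁻¹ •
        ((q⁻¹ ^ 3 + q⁻¹) • (As ^ 2 * A ^ 2) - (q ^ 3 + q) • (A ^ 2 * As ^ 2)
          + (q⁻¹ ^ 3 - q ^ 3) • (As * A ^ 2 * As + A * As ^ 2 * A)
          - (q⁻¹ ^ 5 + q⁻¹ ^ 3 + 2 * q⁻¹) • (As * A * As * A)
          + (q ^ 5 + q ^ 3 + 2 * q) • (A * As * A * As)
          + (ρ * (q - q⁻¹)) • (As ^ 2 + A ^ 2)
          + (a₁ * (q ^ 2 + q⁻¹ ^ 2) * (q - q⁻¹)) • qcomm q A As) + a₂ • (1 : R))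
    : lieComm A G2 + lieComm G1 Wm1 = 0 := by
  subst hG1 hWm1 hG2
  exact stmt_10_general (sq_add_inv_sq_ne_zero hq hq8) hρ a₁ a₂ hDG1
end

section
/- In R one has [W₀, G̃₂] + [G̃₁, W₋₁] = 0, i.e. [A, G̃₂] + [G̃₁, W₋₁] = 0. (Image of the O_q(ŝl₂) relation (qo7) with k = 0, l = 1.) -/
/-!
Put `β = q² + q⁻²`, `Q = [A, B]_q` and `U = A²B - βABA + BA² - ρB`. The q-Dolan–Grady relation for
`A` says exactly that `U` commutes with `A`, and up to a multiple of `A` the element `W₋₁` is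
`-ρ⁻¹U`. On the other hand, up to terms in `A²`, `Q` and `1`, `ρβ G̃₂` equals
`(q - q⁻¹)F - (q + q⁻¹)[U, B]_{q²}` for a quartic `F` depending on `q` only through `β`. Because `U`
commutes with `A`, the bracket of `A` with the second term is a multiple of `[U, [A, B]]_{q²}`,
and this combines with `[A, F]` to `β[Q, U]`. The remaining multiples of `[A, Q]` cancel.
-/

section Tridiagonal

variable {K R : Type*} [CommRing K] [Ring R] [Algebra K R]

/-- The element `A²B - βABA + BA² - ρB`; the tridiagonal relation (with `γ = 0`) states that it
commutes with `A`. -/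
def tridiagonalElement (β ρ : K) (A B : R) : R :=
  A ^ 2 * B - β • (A * B * A) + B * A ^ 2 - ρ • B

/-- The part of `G̃₂` whose coefficients depend on `q` only through `β = q² + q⁻²`; see
`gTildeTwo_eq`. -/
def tridiagonalQuartic (β ρ : K) (A B : R) : R :=
  B * A ^ 2 * B + A * B * A * B + B * A * B * A - (β + 1) • (A * B ^ 2 * A + ρ • B ^ 2)

theorem lie_tridiagonalQuartic (β ρ : K) (A B : R) :
    ⁅A, tridiagonalQuartic β ρ A B⁆ =
      tridiagonalElement β ρ A B * (A * B - (β + 1) • (B * A)) +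
        ((β + 1) • (A * B) - B * A) * tridiagonalElement β ρ A B := by
  simp only [tridiagonalElement, tridiagonalQuartic, Ring.lie_def, pow_two, mul_add, add_mul,
    mul_sub, sub_mul, smul_mul_assoc, mul_smul_comm, mul_assoc]
  module

end Tridiagonal

section AlternatingElements

variable {K R : Type*} [Field K] [Ring R] [Algebra K R]

attribute [local instance] LieRing.ofAssociativeRing

/-- The q-commutator `[X, Y]_q = qXY - q⁻¹YX` over an arbitrary field; over `ℂ` it is `qcomm`. -/
def qBracket (q : K) (X Y : R) : R :=
  q • (X * Y) - q⁻¹ • (Y * X)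

theorem lie_qBracket_of_commute {X Y : R} (h : Commute X Y) (q : K) (Z : R) :
    ⁅X, qBracket q Y Z⁆ = qBracket q Y ⁅X, Z⁆ := by
  have hYZ : ⁅X, Y * Z⁆ = Y * ⁅X, Z⁆ := by
    rw [Ring.lie_def, Ring.lie_def, mul_sub, ← mul_assoc, h.eq, mul_assoc, mul_assoc]
  have hZY : ⁅X, Z * Y⁆ = ⁅X, Z⁆ * Y := by
    rw [Ring.lie_def, Ring.lie_def, sub_mul, mul_assoc Z Y X, ← h.eq, mul_assoc, mul_assoc]
  simp only [qBracket, lie_sub, lie_smul (R := K), hYZ, hZY]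

theorem qBracket_inv_qBracket {q : K} (hq : q ≠ 0) (ρ : K) (A B : R) :
    qBracket q⁻¹ A (qBracket q A B) =
      tridiagonalElement (q ^ 2 + q⁻¹ ^ 2) ρ A B + ρ • B := by
  simp only [qBracket, tridiagonalElement, pow_two A, mul_sub, sub_mul, smul_mul_assoc,
    mul_smul_comm, mul_assoc, inv_inv]
  match_scalars <;> field_simp <;> ring

theorem commute_tridiagonalElement_iff {q : K} (hq : q ≠ 0) {ρ : K} {A B : R} :
    Commute A (tridiagonalElement (q ^ 2 + q⁻¹ ^ 2) ρ A B) ↔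
      ⁅A, qBracket q⁻¹ A (qBracket q A B)⁆ = ρ • ⁅A, B⁆ := by
  rw [qBracket_inv_qBracket hq ρ, lie_add, lie_smul (R := K), add_eq_right, commute_iff_lie_eq]

theorem smul_lie_qBracket_add {q : K} (hq : q ≠ 0) (A B U : R) :
    (q ^ 2 + q⁻¹ ^ 2) • ⁅qBracket q A B, U⁆ + (q + q⁻¹) • qBracket (q ^ 2) U ⁅A, B⁆ =
      (q - q⁻¹) • (U * (A * B - (q ^ 2 + q⁻¹ ^ 2 + 1) • (B * A)) +
        ((q ^ 2 + q⁻¹ ^ 2 + 1) • (A * B) - B * A) * U) := by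
  simp only [qBracket, Ring.lie_def, mul_sub, sub_mul, smul_mul_assoc, mul_smul_comm, mul_assoc]
  match_scalars <;> field_simp <;> ring

theorem smul_lie_qBracket_tridiagonalElement {q : K} (hq : q ≠ 0) {ρ : K} {A B : R}
    (hU : Commute A (tridiagonalElement (q ^ 2 + q⁻¹ ^ 2) ρ A B)) :
    (q ^ 2 + q⁻¹ ^ 2) • ⁅qBracket q A B, tridiagonalElement (q ^ 2 + q⁻¹ ^ 2) ρ A B⁆ =
      ⁅A, (q - q⁻¹) • tridiagonalQuartic (q ^ 2 + q⁻¹ ^ 2) ρ A B -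
        (q + q⁻¹) • qBracket (q ^ 2) (tridiagonalElement (q ^ 2 + q⁻¹ ^ 2) ρ A B) B⁆ := by
  rw [lie_sub, lie_smul (R := K), lie_smul (R := K), lie_qBracket_of_commute hU,
    lie_tridiagonalQuartic, ← smul_lie_qBracket_add hq, add_sub_cancel_right]

/-- The image in `R` of the generator `G̃₁` of `O_q(ŝl₂)`; `B` plays the role of `A*`. -/
def gTildeOne (q a₁ : K) (A B : R) : R :=
  qBracket q A B + a₁ • (1 : R)

/-- The image in `R` of the generator `W₋₁` of `O_q(ŝl₂)`; `B` plays the role of `A*`. -/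
def wNegOne (q ρ a₁ : K) (A B : R) : R :=
  ρ⁻¹ • ((q ^ 2 + q⁻¹ ^ 2) • (A * B * A) - A ^ 2 * B - B * A ^ 2) + B +
    (ρ⁻¹ * a₁ * (q - q⁻¹)) • A

/-- The image in `R` of the generator `G̃₂` of `O_q(ŝl₂)`; `B` plays the role of `A*`. -/
def gTildeTwo (q ρ a₁ a₂ : K) (A B : R) : R :=
  (ρ * (q ^ 2 + q⁻¹ ^ 2))⁻¹ •
    ((q⁻¹ ^ 3 + q⁻¹) • (B ^ 2 * A ^ 2) - (q ^ 3 + q) • (A ^ 2 * B ^ 2)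
      + (q⁻¹ ^ 3 - q ^ 3) • (B * A ^ 2 * B + A * B ^ 2 * A)
      - (q⁻¹ ^ 5 + q⁻¹ ^ 3 + 2 * q⁻¹) • (B * A * B * A)
      + (q ^ 5 + q ^ 3 + 2 * q) • (A * B * A * B)
      + (ρ * (q - q⁻¹)) • (B ^ 2 + A ^ 2)
      + (a₁ * (q ^ 2 + q⁻¹ ^ 2) * (q - q⁻¹)) • qBracket q A B) + a₂ • (1 : R)

theorem wNegOne_eq {ρ : K} (hρ : ρ ≠ 0) (q a₁ : K) (A B : R) :
    wNegOne q ρ a₁ A B =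
      (ρ⁻¹ * a₁ * (q - q⁻¹)) • A - ρ⁻¹ • tridiagonalElement (q ^ 2 + q⁻¹ ^ 2) ρ A B := by
  rw [wNegOne, tridiagonalElement, smul_sub ρ⁻¹ _ (ρ • B), inv_smul_smul₀ hρ]
  module

theorem gTildeTwo_eq {q : K} (hq : q ≠ 0) (ρ a₁ a₂ : K) (A B : R) :
    gTildeTwo q ρ a₁ a₂ A B =
      (ρ * (q ^ 2 + q⁻¹ ^ 2))⁻¹ •
        ((q - q⁻¹) • tridiagonalQuartic (q ^ 2 + q⁻¹ ^ 2) ρ A B -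
            (q + q⁻¹) • qBracket (q ^ 2) (tridiagonalElement (q ^ 2 + q⁻¹ ^ 2) ρ A B) B +
          (ρ * (q - q⁻¹)) • A ^ 2 +
          (a₁ * (q ^ 2 + q⁻¹ ^ 2) * (q - q⁻¹)) • qBracket q A B) + a₂ • (1 : R) := by
  rw [gTildeTwo]
  congr 3
  simp only [tridiagonalElement, tridiagonalQuartic, qBracket, pow_two A, pow_two B, mul_add,
    add_mul, mul_sub, sub_mul, smul_mul_assoc, mul_smul_comm, mul_assoc]
  match_scalars <;> field_simp <;> ring

theorem lie_gTildeOne_wNegOne {ρ : K} (hρ : ρ ≠ 0) (q a₁ : K) (A B : R) :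
    ⁅gTildeOne q a₁ A B, wNegOne q ρ a₁ A B⁆ =
      -(ρ⁻¹ • ⁅qBracket q A B, tridiagonalElement (q ^ 2 + q⁻¹ ^ 2) ρ A B⁆ +
        (ρ⁻¹ * a₁ * (q - q⁻¹)) • ⁅A, qBracket q A B⁆) := by
  have lie_one_left (X : R) : ⁅(1 : R), X⁆ = 0 := (Commute.one_left X).lie_eq
  rw [wNegOne_eq hρ, gTildeOne, ← lie_skew A (qBracket q A B)]
  simp only [add_lie, lie_sub, lie_smul (R := K), smul_lie (R := K), lie_one_left]
  module

theorem lie_gTildeTwo {q ρ : K} (hβ : q ^ 2 + q⁻¹ ^ 2 ≠ 0) {A B : R}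
    (hU : Commute A (tridiagonalElement (q ^ 2 + q⁻¹ ^ 2) ρ A B)) (a₁ a₂ : K) :
    ⁅A, gTildeTwo q ρ a₁ a₂ A B⁆ =
      ρ⁻¹ • ⁅qBracket q A B, tridiagonalElement (q ^ 2 + q⁻¹ ^ 2) ρ A B⁆ +
        (ρ⁻¹ * a₁ * (q - q⁻¹)) • ⁅A, qBracket q A B⁆ := by
  have hq : q ≠ 0 := by rintro rfl; simp at hβ
  have lie_one_right : ⁅A, (1 : R)⁆ = 0 := (Commute.one_right A).lie_eq
  have lie_sq : ⁅A, A ^ 2⁆ = 0 := ((Commute.refl A).pow_right 2).lie_eq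
  rw [gTildeTwo_eq hq, lie_add, lie_smul (R := K), lie_add, lie_add,
    ← smul_lie_qBracket_tridiagonalElement hq hU]
  simp only [lie_smul (R := K), lie_one_right, lie_sq]
  generalize q ^ 2 + q⁻¹ ^ 2 = β at hβ ⊢
  match_scalars <;> field_simp

end AlternatingElements

theorem sq_add_inv_sq_ne_zero {K : Type*} [Field K] {q : K} (hq : q ≠ 0) (hq8 : q ^ 8 ≠ 1) :
    q ^ 2 + q⁻¹ ^ 2 ≠ 0 := by
  intro hβ
  have hq4 : q ^ 4 + 1 = 0 := by
    calc q ^ 4 + 1 = q ^ 2 * (q ^ 2 + q⁻¹ ^ 2) := by field_simp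
      _ = 0 := by rw [hβ, mul_zero]
  exact hq8 (by linear_combination (q ^ 4 - 1) * hq4)

theorem stmt_11_general {K R : Type*} [Field K] [Ring R] [Algebra K R]
    {q ρ : K} (hβ : q ^ 2 + q⁻¹ ^ 2 ≠ 0) (hρ : ρ ≠ 0) {A B : R}
    (hDG : ⁅A, qBracket q⁻¹ A (qBracket q A B)⁆ = ρ • ⁅A, B⁆) (a₁ a₂ : K) :
    ⁅A, gTildeTwo q ρ a₁ a₂ A B⁆ + ⁅gTildeOne q a₁ A B, wNegOne q ρ a₁ A B⁆ = 0 := by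
  have hq : q ≠ 0 := by rintro rfl; simp at hβ
  have hU := (commute_tridiagonalElement_iff hq).mpr hDG
  rw [lie_gTildeTwo hβ hU, lie_gTildeOne_wNegOne hρ, add_neg_cancel]

theorem stmt_11
    {R : Type*} [Ring R] [Algebra ℂ R]
    (q ρ a₁ : ℂ) (hq : q ≠ 0) (hq8 : q ^ 8 ≠ 1) (hρ : ρ ≠ 0)
    (A As : R)
    (hDG1 : lieComm A (qcomm q⁻¹ A (qcomm q A As)) = ρ • lieComm A As)
    (hDG2 : lieComm As (qcomm q⁻¹ As (qcomm q As A)) = ρ • lieComm As A)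
    (G1 Gt1 Wm1 W2 : R)
    (hG1 : G1 = qcomm q As A + a₁ • (1 : R))
    (hGt1 : Gt1 = qcomm q A As + a₁ • (1 : R))
    (hWm1 : Wm1 = ρ⁻¹ • ((q ^ 2 + q⁻¹ ^ 2) • (A * As * A) - A ^ 2 * As - As * A ^ 2)
        + As + (ρ⁻¹ * a₁ * (q - q⁻¹)) • A)
    (hW2 : W2 = ρ⁻¹ • ((q ^ 2 + q⁻¹ ^ 2) • (As * A * As) - As ^ 2 * A - A * As ^ 2)
        + A + (ρ⁻¹ * a₁ * (q - q⁻¹)) • As)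
    (a₂ : ℂ) (G2 Gt2 : R)
    (hG2 : G2 = (ρ * (q ^ 2 + q⁻¹ ^ 2))⁻¹ •
        ((q⁻¹ ^ 3 + q⁻¹) • (A ^ 2 * As ^ 2) - (q ^ 3 + q) • (As ^ 2 * A ^ 2)
          + (q⁻¹ ^ 3 - q ^ 3) • (A * As ^ 2 * A + As * A ^ 2 * As)
          - (q⁻¹ ^ 5 + q⁻¹ ^ 3 + 2 * q⁻¹) • (A * As * A * As)
          + (q ^ 5 + q ^ 3 + 2 * q) • (As * A * As * A)
          + (ρ * (q - q⁻¹)) • (A ^ 2 + As ^ 2)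
          + (a₁ * (q ^ 2 + q⁻¹ ^ 2) * (q - q⁻¹)) • qcomm q As A) + a₂ • (1 : R))
    (hGt2 : Gt2 = (ρ * (q ^ 2 + q⁻¹ ^ 2))⁻¹ •
        ((q⁻¹ ^ 3 + q⁻¹) • (As ^ 2 * A ^ 2) - (q ^ 3 + q) • (A ^ 2 * As ^ 2)
          + (q⁻¹ ^ 3 - q ^ 3) • (As * A ^ 2 * As + A * As ^ 2 * A)
          - (q⁻¹ ^ 5 + q⁻¹ ^ 3 + 2 * q⁻¹) • (As * A * As * A)
          + (q ^ 5 + q ^ 3 + 2 * q) • (A * As * A * As)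
          + (ρ * (q - q⁻¹)) • (As ^ 2 + A ^ 2)
          + (a₁ * (q ^ 2 + q⁻¹ ^ 2) * (q - q⁻¹)) • qcomm q A As) + a₂ • (1 : R))
    : lieComm A Gt2 + lieComm Gt1 Wm1 = 0 := by
  subst hGt1 hWm1 hGt2
  exact stmt_11_general (sq_add_inv_sq_ne_zero hq hq8) hρ hDG1 a₁ a₂
end

section
/- (Classical Dolan–Grady hierarchy, first level; the q = 1 specialization.) For all scalars κ, κ* ∈ ℂ, the elements κA + κ*A* and κB + κ*B* of R commute: [κA + κ*A*, κB + κ*B*] = 0. -/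
/-!
Write `u = ρ y - [x, [x, y]]` and `v = ρ x - [y, [y, x]]`. The Dolan–Grady relations say exactly
that `[x, u] = 0` and `[y, v] = 0`. Since `[[x, y], [x, y]] = 0`, the operators `ad x` and `ad y`
commute on `[x, y]`, whence `[x, v] + [y, u] = 0`. These are the three coefficients of
`[κ x + μ y, κ u + μ v]` as a quadratic form in `(κ, μ)`. For `(x, y) = (A, A*)`, expanding the
double commutators gives `u = ρ B` and `v = ρ B*`.
-/

section LieAlgebra

variable {K L : Type*} [CommRing K] [LieRing L] [LieAlgebra K L]

/-- The Dolan–Grady relations with parameter `ρ` for two elements of a Lie algebra; such a pair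
generates a quotient of the Onsager algebra when `ρ` is a nonzero complex number. -/
structure IsDolanGradyPair (ρ : K) (x y : L) : Prop where
  lie_left : ⁅x, ⁅x, ⁅x, y⁆⁆⁆ = ρ • ⁅x, y⁆
  lie_right : ⁅y, ⁅y, ⁅y, x⁆⁆⁆ = ρ • ⁅y, x⁆

/-- The next element of the Dolan–Grady hierarchy after `y`, scaled by `ρ` so that no division is
needed: for `(x, y) = (A, A*)` it is `ρ B`, and for `(x, y) = (A*, A)` it is `ρ B*`. -/
def dolanGradyNext (ρ : K) (x y : L) : L := ρ • y - ⁅x, ⁅x, y⁆⁆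

theorem lie_lie_lie_left_comm {L : Type*} [LieRing L] (x y : L) :
    ⁅x, ⁅y, ⁅x, y⁆⁆⁆ = ⁅y, ⁅x, ⁅x, y⁆⁆⁆ := by
  rw [leibniz_lie, lie_self, zero_add]

theorem lie_dolanGradyNext_eq_zero_iff {ρ : K} {x y : L} :
    ⁅x, dolanGradyNext ρ x y⁆ = 0 ↔ ⁅x, ⁅x, ⁅x, y⁆⁆⁆ = ρ • ⁅x, y⁆ := by
  rw [dolanGradyNext, lie_sub, lie_smul, sub_eq_zero, eq_comm]

theorem lie_dolanGradyNext_swap_add_eq_zero (ρ : K) (x y : L) :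
    ⁅x, dolanGradyNext ρ y x⁆ + ⁅y, dolanGradyNext ρ x y⁆ = 0 := by
  have h_quartic : ⁅x, ⁅y, ⁅y, x⁆⁆⁆ = -⁅y, ⁅x, ⁅x, y⁆⁆⁆ := by
    rw [← lie_skew y x, lie_neg, lie_neg, lie_lie_lie_left_comm]
  simp only [dolanGradyNext, lie_sub, lie_smul, lie_self, h_quartic, smul_zero]
  abel

theorem lie_smul_add_smul_eq_zero {x y u v : L} (hxu : ⁅x, u⁆ = 0) (hyv : ⁅y, v⁆ = 0)
    (hxv : ⁅x, v⁆ + ⁅y, u⁆ = 0) (κ μ : K) : ⁅κ • x + μ • y, κ • u + μ • v⁆ = 0 := by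
  calc ⁅κ • x + μ • y, κ • u + μ • v⁆
      = (κ * κ) • ⁅x, u⁆ + (κ * μ) • (⁅x, v⁆ + ⁅y, u⁆) + (μ * μ) • ⁅y, v⁆ := by
        simp only [add_lie, lie_add, smul_lie, lie_smul]
        module
    _ = 0 := by rw [hxu, hxv, hyv, smul_zero, smul_zero, smul_zero, add_zero, add_zero]

theorem stmt_19_general {ρ : K} {x y : L} (h : IsDolanGradyPair ρ x y) (κ μ : K) :
    ⁅κ • x + μ • y, κ • dolanGradyNext ρ x y + μ • dolanGradyNext ρ y x⁆ = 0 :=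
  lie_smul_add_smul_eq_zero (lie_dolanGradyNext_eq_zero_iff.mpr h.lie_left)
    (lie_dolanGradyNext_eq_zero_iff.mpr h.lie_right) (lie_dolanGradyNext_swap_add_eq_zero ρ x y) κ μ

end LieAlgebra

attribute [local instance] LieRing.ofAssociativeRing

section Associative

variable {R : Type*} [Ring R]

theorem lieComm_eq_lie (X Y : R) : lieComm X Y = ⁅X, Y⁆ := rfl

theorem lie_lie_eq_sq_mul_add_mul_sq_sub (a b : R) :
    ⁅a, ⁅a, b⁆⁆ = a ^ 2 * b + b * a ^ 2 - 2 • (a * b * a) := by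
  simp only [Ring.lie_def]
  noncomm_ring

theorem inv_smul_dolanGradyNext {K : Type*} [Field K] [Algebra K R] {ρ : K} (hρ : ρ ≠ 0)
    (a b : R) :
    ρ⁻¹ • dolanGradyNext ρ a b =
      ρ⁻¹ • ((2 : K) • (a * b * a) - a ^ 2 * b - b * a ^ 2) + b := by
  rw [dolanGradyNext, lie_lie_eq_sq_mul_add_mul_sq_sub, smul_sub, inv_smul_smul₀ hρ]
  module

end Associative

theorem stmt_19
    {R : Type*} [Ring R] [Algebra ℂ R]
    (ρ : ℂ) (hρ : ρ ≠ 0)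
    (A As : R)
    (hDG1 : lieComm A (lieComm A (lieComm A As)) = ρ • lieComm A As)
    (hDG2 : lieComm As (lieComm As (lieComm As A)) = ρ • lieComm As A)
    (B Bs : R)
    (hB : B = ρ⁻¹ • ((2 : ℂ) • (A * As * A) - A ^ 2 * As - As * A ^ 2) + As)
    (hBs : Bs = ρ⁻¹ • ((2 : ℂ) • (As * A * As) - As ^ 2 * A - A * As ^ 2) + A)
    : ∀ κ κs : ℂ, lieComm (κ • A + κs • As) (κ • B + κs • Bs) = 0 := by
  intro κ κs
  have hpair : IsDolanGradyPair ρ A As := ⟨hDG1, hDG2⟩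
  rw [hB, hBs, ← inv_smul_dolanGradyNext hρ, ← inv_smul_dolanGradyNext hρ, smul_comm κ,
    smul_comm κs, ← smul_add, lieComm_eq_lie, lie_smul, stmt_19_general hpair, smul_zero]
end
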